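/- arXiv:1806.10700 — 2 statements merged into one kernel-verified Lean document; each statement's English description precedes it below -/
import Mathlib

section
/- Fix an infinite totally ordered index set 𝔦 and positive integers ℓ, m. Let P be the poset that is the disjoint union of two chains {i_1 < … < i_ℓ} and {j_1 < … < j_m} (with no order relations between elements of different chains). Then for compositions I = (I_1, …, I_ℓ) and J = (J_1, …, J_m), the product of monomial quasisymmetric functions satisfies M_I · M_J = Σ_f M_{f̃}, where f ranges over all surjective, strictly order-preserving maps f: P → {1, …, n} for some n ∈ ℕ, and the composition f̃ of length n is defined by (f̃)_x := Σ_{i_u ∈ f⁻¹(x)} I_u + Σ_{j_u ∈ f⁻¹(x)} J_u. -/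
/-!
STATEMENT 4: For an infinite totally ordered index set, compositions `I` (of length `ℓ`) and
`J` (of length `m`), the product of the monomial quasisymmetric functions is
`M_I · M_J = Σ_f M_{f̃}`, where `f` ranges over all surjective strictly order-preserving maps
from the disjoint union of the two chains `Fin ℓ` and `Fin m` (with no relations between the
two chains, i.e. the canonical partial order on `Fin ℓ ⊕ Fin m`) to a chain `{1, …, n}`, and
`(f̃)_x = Σ_{i_u ∈ f⁻¹(x)} I_u + Σ_{j_u ∈ f⁻¹(x)} J_u`.
(Such a surjective strictly order-preserving map forces `n ≤ ℓ + m`, so the outer sum over `n`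
is written as the finite sum over `n ≤ ℓ + m`.)
-/

open MvPowerSeries

noncomputable section

/-- The exponent vector of the monomial `α_{i 0}^{l 0} ⋯ α_{i (ℓ-1)}^{l (ℓ-1)}`. -/
def qsMonomN {ι : Type*} (l : List ℕ) (i : Fin l.length → ι) : ι →₀ ℕ :=
  ∑ k : Fin l.length, Finsupp.single (i k) (l.get k)

open Classical in
/-- The monomial quasisymmetric function `M_I` attached to a list `I` of exponents. -/
def MqsN (ι : Type*) [LinearOrder ι] (I : List ℕ) : MvPowerSeries ι ℤ :=
  fun d => if ∃ i : Fin I.length → ι, StrictMono i ∧ d = qsMonomN I i then 1 else 0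

theorem qsMonomN_support {ι : Type*} (l : List ℕ) (hl : ∀ a ∈ l, 0 < a)
    (i : Fin l.length → ι) (x : ι) : qsMonomN l i x ≠ 0 ↔ x ∈ Set.range i := by
  classical
  unfold qsMonomN
  rw [Finsupp.finsetSum_apply, ne_eq, Finset.sum_eq_zero_iff]
  simp only [Finsupp.single_apply]
  constructor
  · intro h
    by_contra hx
    apply h
    intro k _
    rw [if_neg]
    intro hk
    exact hx ⟨k, hk⟩
  · rintro ⟨k, rfl⟩ h
    have := h k (Finset.mem_univ k)
    rw [if_pos rfl] at this
    have h2 := hl (l.get k) (List.get_mem l k)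
    omega

theorem qsMonomN_inj {ι : Type*} [LinearOrder ι] (l : List ℕ) (hl : ∀ a ∈ l, 0 < a)
    (i j : Fin l.length → ι) (hi : StrictMono i) (hj : StrictMono j)
    (h : qsMonomN l i = qsMonomN l j) : i = j := by
  apply (StrictMono.range_inj hi hj).1
  ext x
  rw [← qsMonomN_support l hl, ← qsMonomN_support l hl, h]

theorem exists_ofFn_iff {ι : Type*} [LinearOrder ι] (n : ℕ) (g : Fin n → ℕ) (d : ι →₀ ℕ) :
    (∃ i : Fin (List.ofFn g).length → ι, StrictMono i ∧ d = qsMonomN (List.ofFn g) i) ↔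
      ∃ c : Fin n → ι, StrictMono c ∧ d = ∑ k, Finsupp.single (c k) (g k) := by
  have e : (List.ofFn g).length = n := List.length_ofFn
  constructor
  · rintro ⟨i, hi, rfl⟩
    refine ⟨fun k => i (Fin.cast e.symm k), fun a b hab => hi (by simpa using hab), ?_⟩
    unfold qsMonomN
    refine Fintype.sum_equiv (finCongr e) _ _ ?_
    intro k
    simp
    rfl
  · rintro ⟨c, hc, rfl⟩
    refine ⟨fun k => c (Fin.cast e k), fun a b hab => hc (by simpa using hab), ?_⟩
    unfold qsMonomN
    refine Fintype.sum_equiv (finCongr e.symm) _ _ ?_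
    intro k
    simp

theorem sum_fiber_single {ι : Type*} {n : ℕ} (l : List ℕ) (c : Fin n → ι)
    (f : Fin l.length → Fin n) :
    ∑ x, Finsupp.single (c x) (∑ u ∈ Finset.univ.filter (fun u => f u = x), l.get u) =
      qsMonomN l (fun u => c (f u)) := by
  unfold qsMonomN
  rw [← Finset.sum_fiberwise (s := Finset.univ) (g := f)]
  refine Finset.sum_congr rfl fun x _ => ?_
  rw [Finsupp.single_finsetSum]
  refine Finset.sum_congr rfl fun u hu => ?_
  rw [← (Finset.mem_filter.1 hu).2]

open Classical in
theorem monomial_qsym_product_rule (ι : Type*) [LinearOrder ι] [Infinite ι]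
    (I J : List ℕ) (hI : ∀ a ∈ I, 0 < a) (hJ : ∀ a ∈ J, 0 < a)
    (hIlen : 0 < I.length) (hJlen : 0 < J.length) :
    MqsN ι I * MqsN ι J =
      ∑ n ∈ Finset.range (I.length + J.length + 1),
        ∑ f ∈ Finset.univ.filter
            (fun f : (Fin I.length ⊕ Fin J.length) → Fin n =>
              Function.Surjective f ∧ StrictMono f),
          MqsN ι (List.ofFn (fun x : Fin n =>
            (∑ u ∈ Finset.univ.filter (fun u : Fin I.length => f (Sum.inl u) = x), I.get u) +
            (∑ u ∈ Finset.univ.filter (fun u : Fin J.length => f (Sum.inr u) = x), J.get u))) := by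
  ext d
  have key : ∀ (n : ℕ) (f : (Fin I.length ⊕ Fin J.length) → Fin n),
      (∃ c : Fin n → ι, StrictMono c ∧
        d = qsMonomN I (fun u => c (f (Sum.inl u))) + qsMonomN J (fun u => c (f (Sum.inr u)))) ↔
      (∃ i, StrictMono i ∧ d = qsMonomN (List.ofFn (fun x : Fin n =>
            (∑ u ∈ Finset.univ.filter (fun u : Fin I.length => f (Sum.inl u) = x), I.get u) +
            (∑ u ∈ Finset.univ.filter
              (fun u : Fin J.length => f (Sum.inr u) = x), J.get u))) i) := by
    intro n f
    rw [exists_ofFn_iff]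
    simp only [Finsupp.single_add, Finset.sum_add_distrib]
    refine exists_congr fun c => ?_
    rw [sum_fiber_single I c (fun u => f (Sum.inl u)),
      sum_fiber_single J c (fun u => f (Sum.inr u))]
  have hR : ∀ L : List ℕ, coeff d (MqsN ι L) =
      if ∃ i : Fin L.length → ι, StrictMono i ∧ d = qsMonomN L i then 1 else 0 := fun _ => rfl
  have hL : ∀ (L : List ℕ) (e : ι →₀ ℕ), coeff e (MqsN ι L) =
      if ∃ i : Fin L.length → ι, StrictMono i ∧ e = qsMonomN L i then 1 else 0 := fun _ _ => rfl
  rw [coeff_mul, map_sum]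
  simp only [map_sum, hL, ← key]
  rw [Finset.sum_sigma']
  simp only [← ite_and, mul_ite, mul_one, mul_zero]
  rw [← Finset.sum_filter, ← Finset.sum_filter]
  symm
  simp only [Finset.sum_const, nsmul_eq_mul, mul_one, Nat.cast_inj]
  have hmem : ∀ x ∈ (((Finset.range (I.length + J.length + 1)).sigma fun n =>
      Finset.univ.filter (fun f : (Fin I.length ⊕ Fin J.length) → Fin n =>
              Function.Surjective f ∧ StrictMono f)).filter fun x => ∃ c : Fin x.1 → ι,
        StrictMono c ∧ d = qsMonomN I (fun u => c (x.2 (Sum.inl u))) +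
          qsMonomN J (fun u => c (x.2 (Sum.inr u)))), Function.Surjective x.2 ∧ StrictMono x.2 ∧
        ∃ c : Fin x.1 → ι,
        StrictMono c ∧ d = qsMonomN I (fun u => c (x.2 (Sum.inl u))) +
          qsMonomN J (fun u => c (x.2 (Sum.inr u))) := by
    intro x hx
    simp only [Finset.mem_filter, Finset.mem_sigma, Finset.mem_univ, true_and] at hx
    exact ⟨hx.1.2.1, hx.1.2.2, hx.2⟩
  refine Finset.card_bij (fun x hx =>
    (qsMonomN I (fun u => (hmem x hx).2.2.choose (x.2 (Sum.inl u))),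
     qsMonomN J (fun u => (hmem x hx).2.2.choose (x.2 (Sum.inr u))))) ?_ ?_ ?_
  · intro x hx
    obtain ⟨hc, hd⟩ := (hmem x hx).2.2.choose_spec
    have hf := (hmem x hx).2.1
    simp only [Finset.mem_filter]
    exact ⟨Finset.HasAntidiagonal.mem_antidiagonal.2 hd.symm, by
      first
      | exact ⟨⟨_, fun a b hab => hc (hf (Sum.inl_lt_inl_iff.2 hab)), rfl⟩,
          ⟨_, fun a b hab => hc (hf (Sum.inr_lt_inr_iff.2 hab)), rfl⟩⟩
      | exact ⟨⟨_, fun a b hab => hc (hf (Sum.inr_lt_inr_iff.2 hab)), rfl⟩,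
          ⟨_, fun a b hab => hc (hf (Sum.inl_lt_inl_iff.2 hab)), rfl⟩⟩⟩
  · intro x hx y hy hxy
    obtain ⟨hc, -⟩ := (hmem x hx).2.2.choose_spec
    obtain ⟨hc', -⟩ := (hmem y hy).2.2.choose_spec
    have hf := (hmem x hx).2.1
    have hf' := (hmem y hy).2.1
    have hs := (hmem x hx).1
    have hs' := (hmem y hy).1
    generalize (hmem x hx).2.2.choose = c at *
    generalize (hmem y hy).2.2.choose = c' at *
    rw [Prod.mk.injEq] at hxy
    have h1 := qsMonomN_inj I hI _ _ (fun a b hab => hc (hf (Sum.inl_lt_inl_iff.2 hab)))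
      (fun a b hab => hc' (hf' (Sum.inl_lt_inl_iff.2 hab))) hxy.1
    have h2 := qsMonomN_inj J hJ _ _ (fun a b hab => hc (hf (Sum.inr_lt_inr_iff.2 hab)))
      (fun a b hab => hc' (hf' (Sum.inr_lt_inr_iff.2 hab))) hxy.2
    obtain ⟨n, f⟩ := x
    obtain ⟨n', f'⟩ := y
    clear hx hy hxy hmem
    dsimp only at *
    have h : c ∘ f = c' ∘ f' := by
      funext z
      rcases z with u | u
      · exact congrFun h1 u
      · exact congrFun h2 u
    have hr : Set.range c = Set.range c' := by
      rw [← hs.range_comp c, ← hs'.range_comp c', h]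
    have hn : n = n' := by
      have a := Set.ncard_univ (Fin n)
      have := congrArg Set.ncard hr
      rw [← Set.image_univ, ← Set.image_univ, Set.ncard_image_of_injective _ hc.injective,
        Set.ncard_image_of_injective _ hc'.injective] at this
      simpa [Set.ncard_univ] using this
    subst hn
    have hcc := (StrictMono.range_inj hc hc').1 hr
    subst hcc
    have : f = f' := funext fun z => hc.injective (congrFun h z)
    rw [this]
  · rintro ⟨p, q⟩ hpq
    simp only [Finset.mem_filter] at hpq
    obtain ⟨a, ha, hp, b, hb, hq⟩ : ∃ a : Fin I.length → ι, StrictMono a ∧ p = qsMonomN I a ∧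
        ∃ b : Fin J.length → ι, StrictMono b ∧ q = qsMonomN J b := by
      obtain ⟨-, h, h'⟩ := hpq
      first
      | (obtain ⟨a, ha, hp⟩ := h
         obtain ⟨b, hb, hq⟩ := h'
         exact ⟨a, ha, hp, b, hb, hq⟩)
      | (obtain ⟨a, ha, hp⟩ := h'
         obtain ⟨b, hb, hq⟩ := h
         exact ⟨a, ha, hp, b, hb, hq⟩)
    have hd : p + q = d := Finset.HasAntidiagonal.mem_antidiagonal.1 hpq.1
    set g : Fin I.length ⊕ Fin J.length → ι := Sum.elim a b with hg
    set s : Finset ι := Finset.univ.image g with hs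
    set c := s.orderIsoOfFin rfl with hc
    have hgs : ∀ z, g z ∈ s := fun z => Finset.mem_image_of_mem g (Finset.mem_univ z)
    set f : Fin I.length ⊕ Fin J.length → Fin s.card := fun z => c.symm ⟨g z, hgs z⟩ with hf
    have hcf : ∀ z, (c (f z) : ι) = g z := by intro z; simp [hf]
    have hcm : StrictMono (fun k => (c k : ι)) := fun x y hxy => c.strictMono hxy
    have hfs : Function.Surjective f := by
      intro k
      obtain ⟨z, -, hz⟩ := Finset.mem_image.1 (c k).2
      exact ⟨z, hcm.injective (by simp only [hcf, hz])⟩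
    have hfm : StrictMono f := by
      intro x y hxy
      rw [← hcm.lt_iff_lt]
      simp only [hcf]
      rcases x with x | x <;> rcases y with y | y
      · exact ha (Sum.inl_lt_inl_iff.1 hxy)
      · exact absurd hxy Sum.not_inl_lt_inr
      · exact absurd hxy Sum.not_inr_lt_inl
      · exact hb (Sum.inr_lt_inr_iff.1 hxy)
    have hcard : s.card < I.length + J.length + 1 := by
      have := Finset.card_image_le (s := Finset.univ) (f := g)
      rw [Finset.card_univ, Fintype.card_sum, Fintype.card_fin, Fintype.card_fin] at this
      exact Nat.lt_succ_of_le this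
    have hx : (⟨s.card, f⟩ : (n : ℕ) × (Fin I.length ⊕ Fin J.length → Fin n)) ∈
      (((Finset.range (I.length + J.length + 1)).sigma fun n =>
      Finset.univ.filter (fun f : (Fin I.length ⊕ Fin J.length) → Fin n =>
              Function.Surjective f ∧ StrictMono f)).filter fun x => ∃ c : Fin x.1 → ι,
        StrictMono c ∧ d = qsMonomN I (fun u => c (x.2 (Sum.inl u))) +
          qsMonomN J (fun u => c (x.2 (Sum.inr u)))) := by
      simp only [Finset.mem_filter, Finset.mem_sigma, Finset.mem_univ, true_and, Finset.mem_range]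
      refine ⟨⟨hcard, hfs, hfm⟩, fun k => (c k : ι), hcm, ?_⟩
      simp only [hcf]
      rw [← hd, hp, hq]
      rfl
    refine ⟨_, hx, ?_⟩
    obtain ⟨hc1, hd1⟩ := (hmem _ hx).2.2.choose_spec
    generalize (hmem _ hx).2.2.choose = c1 at hc1 hd1 ⊢
    have hrange : ∀ c2 : Fin s.card → ι, d = qsMonomN I (fun u => c2 (f (Sum.inl u))) +
          qsMonomN J (fun u => c2 (f (Sum.inr u))) → Set.range c2 = {x | d x ≠ 0} := by
      intro c2 h2
      ext x
      have hI' := qsMonomN_support I hI (fun u => c2 (f (Sum.inl u))) x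
      have hJ' := qsMonomN_support J hJ (fun u => c2 (f (Sum.inr u))) x
      have : d x ≠ 0 ↔ qsMonomN I (fun u => c2 (f (Sum.inl u))) x ≠ 0 ∨
          qsMonomN J (fun u => c2 (f (Sum.inr u))) x ≠ 0 := by
        rw [h2, Finsupp.add_apply]
        omega
      rw [Set.mem_ofPred_eq, this, hI', hJ']
      constructor
      · rintro ⟨k, rfl⟩
        obtain ⟨z, rfl⟩ := hfs k
        rcases z with u | u
        · exact Or.inl ⟨u, rfl⟩
        · exact Or.inr ⟨u, rfl⟩
      · rintro (⟨u, rfl⟩ | ⟨u, rfl⟩)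
        · exact ⟨_, rfl⟩
        · exact ⟨_, rfl⟩
    have hd2 : d = qsMonomN I (fun u => (c (f (Sum.inl u)) : ι)) +
          qsMonomN J (fun u => (c (f (Sum.inr u)) : ι)) := by
      simp only [hcf]
      rw [← hd, hp, hq]
      rfl
    have heq := (StrictMono.range_inj hc1 hcm).1 ((hrange c1 hd1).trans (hrange (fun k => (c k : ι)) hd2).symm)
    dsimp only at heq ⊢
    rw [heq]
    simp only [hcf]
    rw [hp, hq]
    rfl

end
end

section
/- For every n ≥ 1, the number of Lyndon compositions of n equals b_n := (1/n) Σ_{d | n} μ(d)(2^{n/d} − 1), where μ is the number-theoretic Möbius function. -/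
/-!
STATEMENT 5: For every `n ≥ 1`, the number of Lyndon compositions of `n` equals
`b_n = (1/n) Σ_{d ∣ n} μ(d) (2^{n/d} − 1)`.
-/

/-- The (strict) lexicographic-type order on compositions: `I < J` iff either the entries agree
up to some index `k` valid in both and `I_k < J_k`, or `I` is a proper prefix of `J`. -/
def CompLT (I J : List ℕ+) : Prop :=
  (∃ (k : ℕ) (hI : k < I.length) (hJ : k < J.length),
      (∀ j : ℕ, j < k → ∀ (h₁ : j < I.length) (h₂ : j < J.length),
        I.get ⟨j, h₁⟩ = J.get ⟨j, h₂⟩) ∧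
      I.get ⟨k, hI⟩ < J.get ⟨k, hJ⟩) ∨
  (I <+: J ∧ I ≠ J)

/-- A composition is Lyndon if it is nonempty and every nonempty proper suffix is strictly
greater than it: whenever `I = J ++ K` with `J, K` nonempty, then `I < K`. -/
def IsLyndonComp (I : List ℕ+) : Prop :=
  I ≠ [] ∧ ∀ J K : List ℕ+, J ≠ [] → K ≠ [] → I = J ++ K → CompLT I K


theorem compLT_iff (I J : List ℕ+) : CompLT I J ↔ I < J := by
  rw [List.lt_iff_exists, CompLT]
  constructor
  · rintro (⟨k, h1, h2, h3, h4⟩ | ⟨h1, h2⟩)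
    · exact Or.inr ⟨k, h1, h2, fun j hj => h3 j hj _ _, h4⟩
    · refine Or.inl ⟨List.prefix_iff_eq_take.1 h1, ?_⟩
      rcases lt_or_eq_of_le h1.length_le with h | h
      · exact h
      · exact absurd (h1.eq_of_length h) h2
  · rintro (⟨h1, h2⟩ | ⟨k, h1, h2, h3, h4⟩)
    · refine Or.inr ⟨List.prefix_iff_eq_take.2 h1, ?_⟩
      rintro rfl
      exact lt_irrefl _ h2
    · exact Or.inl ⟨k, h1, h2, fun j hj _ _ => h3 j hj, h4⟩

theorem append_lt_of_lt {a b : List ℕ+} (x y : List ℕ+) (hl : a.length = b.length) (h : a < b) :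
    a ++ x < b ++ y := by
  induction a generalizing b with
  | nil =>
    cases b with
    | nil => exact absurd h (lt_irrefl _)
    | cons c t => simp at hl
  | cons c t ih =>
    cases b with
    | nil => simp at hl
    | cons d s =>
      rw [List.cons_lt_cons_iff] at h
      rw [List.cons_append, List.cons_append, List.cons_lt_cons_iff]
      rcases h with h | ⟨h1, h2⟩
      · exact Or.inl h
      · exact Or.inr ⟨h1, ih (by simpa using hl) h2⟩

theorem le_append_self (a x : List ℕ+) : a ≤ a ++ x := by
  induction a with
  | nil =>
    cases x with
    | nil => exact le_refl _
    | cons c t => exact le_of_lt (List.nil_lt_cons _ _)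
  | cons c t ih =>
    rcases lt_or_eq_of_le ih with h | h
    · apply le_of_lt
      rw [List.cons_append, List.cons_lt_cons_iff]
      exact Or.inr ⟨rfl, h⟩
    · rw [List.cons_append, ← h]

/-- if `K < w` and `K` is not a prefix of `w` then `K ++ x < w`. -/
theorem lt_prefix_or {K w : List ℕ+} (x : List ℕ+) (h : K < w) : K <+: w ∨ K ++ x < w := by
  induction K generalizing w with
  | nil => exact Or.inl List.nil_prefix
  | cons c t ih =>
    cases w with
    | nil => exact absurd h (by simp)
    | cons d s =>
      rw [List.cons_lt_cons_iff] at h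
      rw [List.cons_append, List.cons_lt_cons_iff, List.cons_prefix_cons]
      rcases h with h | ⟨h1, h2⟩
      · exact Or.inr (Or.inl h)
      · rcases ih h2 with h3 | h3
        · exact Or.inl ⟨h1, h3⟩
        · exact Or.inr (Or.inr ⟨h1, h3⟩)

theorem isLyndon_iff (w : List ℕ+) : IsLyndonComp w ↔
    w ≠ [] ∧ ∀ i, 0 < i → i < w.length → w < w.rotate i := by
  unfold IsLyndonComp
  refine and_congr_right fun hw => ?_
  constructor
  · intro h i hi hil
    have h1 := h (w.take i) (w.drop i) (by
      intro h0; have := congrArg List.length h0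
      rw [List.length_take, List.length_nil] at this; omega) (by
      intro h0; have := congrArg List.length h0
      rw [List.length_drop, List.length_nil] at this; omega)
      (List.take_append_drop i w).symm
    rw [compLT_iff] at h1
    rw [List.rotate_eq_drop_append_take hil.le]
    exact lt_of_lt_of_le h1 (le_append_self _ _)
  · intro h J K hJ hK e
    rw [compLT_iff]
    have hJ' := List.length_pos_iff.2 hJ
    have hK' := List.length_pos_iff.2 hK
    have hlen : w.length = J.length + K.length := by rw [e, List.length_append]
    have h1 : w < K ++ J := by
      have := h J.length hJ' (by omega)
      rw [e, List.rotate_append_length_eq] at this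
      rw [e]; exact this
    by_contra hc
    rcases lt_or_eq_of_le (not_lt.1 hc) with hlt | heq
    · rcases lt_prefix_or J hlt with ⟨M, hM⟩ | h2
      · have hlM : M.length = J.length := by
          have := congrArg List.length hM
          simp at this; omega
        have h2 : w < M ++ K := by
          have := h K.length hK' (by omega)
          rw [← hM, List.rotate_append_length_eq] at this
          rw [← hM]; exact this
        rcases lt_trichotomy M J with h3 | h3 | h3
        · have := append_lt_of_lt K K hlM h3
          rw [← e] at this
          exact lt_asymm this h2
        · rw [h3, ← e] at h2; exact lt_irrefl _ h2
        · have := List.append_left_lt (l₁ := K) h3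
          rw [hM] at this
          exact lt_asymm this h1
      · exact lt_asymm h1 h2
    · have := congrArg List.length heq
      omega

/-- powers of words -/
def lpow (w : List ℕ+) : ℕ → List ℕ+
  | 0 => []
  | k + 1 => w ++ lpow w k

theorem lpow_length (w : List ℕ+) (k : ℕ) : (lpow w k).length = k * w.length := by
  induction k with
  | zero => simp [lpow]
  | succ k ih => simp [lpow, ih]; ring

/-- total size of a composition -/
def csum (w : List ℕ+) : ℕ := (List.map PNat.val w).sum

theorem csum_append (u v : List ℕ+) : csum (u ++ v) = csum u + csum v := by simp [csum]

theorem lpow_csum (w : List ℕ+) (k : ℕ) : csum (lpow w k) = k * csum w := by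
  induction k with
  | zero => simp [lpow, csum]
  | succ k ih => rw [lpow, csum_append, ih]; ring

theorem lpow_swap (u v : List ℕ+) (k : ℕ) : lpow (u ++ v) k ++ u = u ++ lpow (v ++ u) k := by
  induction k with
  | zero => simp [lpow]
  | succ k ih => simp only [lpow, List.append_assoc, ih]

theorem lpow_nil (k : ℕ) : lpow [] k = [] := by
  induction k with
  | zero => rfl
  | succ k ih => simp [lpow, ih]

theorem lpow_rotate_one (w : List ℕ+) (k : ℕ) : (lpow w k).rotate 1 = lpow (w.rotate 1) k := by
  cases w with
  | nil => simp [lpow_nil]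
  | cons a t =>
    cases k with
    | zero => simp [lpow]
    | succ k =>
      have := lpow_swap [a] t k
      simp only [lpow, List.cons_append, List.rotate_cons_succ, List.rotate_zero,
        List.append_assoc]
      simp only [List.cons_append, List.nil_append] at this
      rw [this]
      simp

theorem lpow_rotate (w : List ℕ+) (k i : ℕ) : (lpow w k).rotate i = lpow (w.rotate i) k := by
  induction i with
  | zero => simp
  | succ i ih => rw [← List.rotate_rotate, ih, lpow_rotate_one, List.rotate_rotate]

theorem lpow_lt {u v : List ℕ+} (hl : u.length = v.length) (h : u < v) {k : ℕ} (hk : 0 < k) :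
    lpow u k < lpow v k := by
  obtain ⟨k, rfl⟩ := Nat.exists_eq_succ_of_ne_zero hk.ne'
  exact append_lt_of_lt _ _ hl h

theorem lpow_inj {u v : List ℕ+} (hl : u.length = v.length) {k : ℕ} (hk : 0 < k)
    (h : lpow u k = lpow v k) : u = v := by
  obtain ⟨k, rfl⟩ := Nat.exists_eq_succ_of_ne_zero hk.ne'
  exact (List.append_inj h hl).1

theorem lyn_le {w : List ℕ+} (h : IsLyndonComp w) (i : ℕ) : w ≤ w.rotate i := by
  rw [isLyndon_iff] at h
  rw [← List.rotate_mod]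
  rcases Nat.eq_zero_or_pos (i % w.length) with h0 | h0
  · rw [h0, List.rotate_zero]
  · exact (h.2 _ h0 (Nat.mod_lt _ (List.length_pos_iff.2 h.1))).le

theorem lyn_dvd {w : List ℕ+} (h : IsLyndonComp w) {i : ℕ} (hi : w.rotate i = w) :
    w.length ∣ i := by
  rw [isLyndon_iff] at h
  rw [← List.rotate_mod] at hi
  rcases Nat.eq_zero_or_pos (i % w.length) with h0 | h0
  · exact Nat.dvd_of_mod_eq_zero h0
  · have := h.2 _ h0 (Nat.mod_lt _ (List.length_pos_iff.2 h.1))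
    rw [hi] at this
    exact absurd this (lt_irrefl _)

theorem lpow_lyn_le {w : List ℕ+} (h : IsLyndonComp w) (k i : ℕ) :
    lpow w k ≤ (lpow w k).rotate i := by
  rw [lpow_rotate]
  rcases lt_or_eq_of_le (lyn_le h i) with h1 | h1
  · rcases Nat.eq_zero_or_pos k with rfl | hk
    · exact le_refl _
    · exact (lpow_lt (by simp) h1 hk).le
  · rw [← h1]

theorem rotate_back (l : List ℕ+) (i : ℕ) : ∃ j, (l.rotate i).rotate j = l :=
  ((List.IsRotated.symm ⟨i, rfl⟩ : (l.rotate i) ~r l))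

theorem lyn_unique_dvd {w w' : List ℕ+} (h' : IsLyndonComp w') {k k' : ℕ}
    (hk' : 0 < k') (e : lpow w k = lpow w' k') : w'.length ∣ w.length := by
  apply lyn_dvd h'
  apply lpow_inj (by simp) hk'
  rw [← lpow_rotate, ← e, lpow_rotate, List.rotate_length]

theorem lyn_unique {w w' : List ℕ+} (h : IsLyndonComp w) (h' : IsLyndonComp w') {k k' i i' : ℕ}
    (hk : 0 < k) (hk' : 0 < k') (hi : i < w.length) (hi' : i' < w'.length)
    (e : (lpow w k).rotate i = (lpow w' k').rotate i') : w = w' ∧ i = i' := by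
  have e1 : lpow w k = lpow w' k' := by
    apply le_antisymm
    · obtain ⟨j, hj⟩ := rotate_back (lpow w' k') i'
      rw [← hj, ← e, List.rotate_rotate]
      exact lpow_lyn_le h _ _
    · obtain ⟨j, hj⟩ := rotate_back (lpow w k) i
      rw [← hj, e, List.rotate_rotate]
      exact lpow_lyn_le h' _ _
  have e2 : w.length = w'.length :=
    Nat.dvd_antisymm (lyn_unique_dvd h hk e1.symm) (lyn_unique_dvd h' hk' e1)
  have e3 : w = w' := by
    obtain ⟨k, rfl⟩ := Nat.exists_eq_succ_of_ne_zero hk.ne'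
    obtain ⟨k', rfl⟩ := Nat.exists_eq_succ_of_ne_zero hk'.ne'
    exact (List.append_inj e1 e2).1
  subst e3
  refine ⟨rfl, ?_⟩
  rw [e1, lpow_rotate, lpow_rotate] at e
  have e4 := lpow_inj (by simp) hk' e
  clear e e1
  wlog hii : i ≤ i' generalizing i i'
  · exact (this hi' hi e4.symm (by omega)).symm
  · obtain ⟨d, rfl⟩ := Nat.exists_eq_add_of_le hii
    rw [add_comm, ← List.rotate_rotate] at e4
    have e5 : w.rotate d = w := by
      rw [List.rotate_rotate, add_comm, ← List.rotate_rotate] at e4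
      rw [List.rotate_rotate, add_comm, ← List.rotate_rotate] at e4
      exact (List.rotate_injective i e4).symm
    have := lyn_dvd h e5
    have := Nat.eq_zero_of_dvd_of_lt this (by omega)
    omega

theorem comm_pow (w r : List ℕ+) (k : ℕ) (hl : r.length = k * w.length) (e : r ++ w = w ++ r) :
    r = lpow w k := by
  induction k generalizing r with
  | zero => simpa [lpow] using hl
  | succ k ih =>
    have hp : w <+: r := by
      refine List.prefix_of_prefix_length_le (List.prefix_append w r) ?_ ?_
      · rw [← e]; exact List.prefix_append r w
      · rw [hl]; nlinarith
    obtain ⟨s, rfl⟩ := hp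
    rw [lpow, ← ih s]
    · rw [List.length_append] at hl
      linarith
    · simpa using e

theorem exists_lyn (c : List ℕ+) (hc : c ≠ []) : ∃ w k i, IsLyndonComp w ∧ 0 < k ∧
    i < w.length ∧ c = (lpow w k).rotate i := by
  have hcl := List.length_pos_iff.2 hc
  obtain ⟨m, hm, hmin⟩ : ∃ m, (∃ j, c.rotate j = m) ∧ ∀ i, m ≤ m.rotate i := by
    obtain ⟨j, -, hj⟩ := Finset.exists_min_image (Finset.range c.length) (fun j => c.rotate j)
      ⟨0, by simpa using hcl⟩
    refine ⟨c.rotate j, ⟨j, rfl⟩, fun i => ?_⟩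
    rw [List.rotate_rotate, ← List.rotate_mod c (j + i)]
    exact hj _ (by simpa using Nat.mod_lt _ hcl)
  obtain ⟨j, hj⟩ := hm
  have hml : m.length = c.length := by rw [← hj]; simp
  have hex : ∃ p, 0 < p ∧ m.rotate p = m := ⟨m.length, by omega, List.rotate_length m⟩
  classical
  obtain ⟨hp0, hp⟩ := Nat.find_spec hex
  have hpmin : ∀ q, 0 < q → m.rotate q = m → Nat.find hex ≤ q :=
    fun q h1 h2 => Nat.find_min' hex ⟨h1, h2⟩
  generalize Nat.find hex = p at hp0 hp hpmin
  have hmul : ∀ q, m.rotate (p * q) = m := by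
    intro q
    induction q with
    | zero => simp
    | succ q ih => rw [Nat.mul_succ, ← List.rotate_rotate, ih, hp]
  have hdvd : p ∣ m.length := by
    apply Nat.dvd_of_mod_eq_zero
    by_contra h0
    have h1 : m.rotate (m.length % p) = m := by
      have h2 := List.rotate_rotate m (p * (m.length / p)) (m.length % p)
      rwa [hmul, Nat.div_add_mod, List.rotate_length] at h2
    have := hpmin _ (Nat.pos_of_ne_zero h0) h1
    have := Nat.mod_lt m.length hp0
    omega
  obtain ⟨k, hk⟩ := hdvd
  have hple : p ≤ m.length := hpmin _ (by omega) (List.rotate_length m)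
  have hk0 : 0 < k := by
    rcases Nat.eq_zero_or_pos k with rfl | h
    · rw [mul_zero] at hk; omega
    · exact h
  have hwl : (m.take p).length = p := by simp [hple]
  have hmw : m = lpow (m.take p) k := by
    obtain ⟨k, rfl⟩ := Nat.exists_eq_succ_of_ne_zero hk0.ne'
    rw [List.rotate_eq_drop_append_take hple] at hp
    conv_lhs => rw [← List.take_append_drop p m]
    rw [lpow, ← comm_pow (m.take p) (m.drop p) k]
    · rw [hwl, List.length_drop, hk, Nat.mul_succ, Nat.add_sub_cancel, mul_comm]
    · rw [hp, List.take_append_drop]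
  generalize m.take p = w at hwl hmw
  obtain ⟨i, hi⟩ := rotate_back c j
  refine ⟨w, k, i % w.length, ?_, hk0, Nat.mod_lt _ (by omega), ?_⟩
  · rw [isLyndon_iff]
    refine ⟨List.length_pos_iff.1 (by omega), fun q hq hql => ?_⟩
    by_contra hlt
    rcases lt_or_eq_of_le (not_lt.1 hlt) with h1 | h1
    · have := lpow_lt (by simp) h1 hk0
      rw [← lpow_rotate, ← hmw] at this
      exact absurd this (not_lt.2 (hmin q))
    · have := hpmin q hq (by rw [hmw, lpow_rotate, h1])
      omega
  · rw [lpow_rotate, List.rotate_mod, ← lpow_rotate, ← hmw, ← hj, hi]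

/-- increment the head -/
def incHead : List ℕ+ → List ℕ+
  | [] => []
  | a :: l => (a + 1) :: l

/-- all compositions of `n+1` -/
def comps : ℕ → Finset (List ℕ+)
  | 0 => {[1]}
  | n + 1 => (comps n).image (fun l => 1 :: l) ∪ (comps n).image incHead

theorem csum_nil : csum [] = 0 := rfl

theorem csum_cons (a : ℕ+) (l : List ℕ+) : csum (a :: l) = a + csum l := by simp [csum]

theorem csum_eq_zero {l : List ℕ+} (h : csum l = 0) : l = [] := by
  cases l with
  | nil => rfl
  | cons a t =>
    rw [csum_cons] at h
    have := a.pos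
    omega

theorem mem_comps (n : ℕ) (l : List ℕ+) : l ∈ comps n ↔ csum l = n + 1 := by
  induction n generalizing l with
  | zero =>
    simp only [comps, Finset.mem_singleton]
    constructor
    · rintro rfl; rfl
    · intro h
      cases l with
      | nil => simp [csum_nil] at h
      | cons a t =>
        rw [csum_cons] at h
        have := a.pos
        have h1 := csum_eq_zero (l := t) (by omega)
        subst h1
        have : a = 1 := PNat.eq (by rw [csum_nil] at h; simpa using h)
        rw [this]
  | succ n ih =>
    simp only [comps, Finset.mem_union, Finset.mem_image, ih]
    constructor
    · rintro (⟨t, ht, rfl⟩ | ⟨t, ht, rfl⟩)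
      · rw [csum_cons, ht, PNat.one_coe]; omega
      · cases t with
        | nil => simp [csum_nil] at ht
        | cons a t =>
          rw [csum_cons] at ht
          rw [incHead, csum_cons, PNat.add_coe, PNat.one_coe]; omega
    · intro h
      cases l with
      | nil => simp [csum_nil] at h
      | cons a t =>
        rw [csum_cons] at h
        by_cases ha : a = 1
        · subst ha
          rw [PNat.one_coe] at h
          exact Or.inl ⟨t, by omega, rfl⟩
        · obtain ⟨b, rfl⟩ := PNat.exists_eq_succ_of_ne_one ha
          rw [PNat.add_coe, PNat.one_coe] at h
          refine Or.inr ⟨b :: t, ?_, rfl⟩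
          rw [csum_cons]; omega

/-- value of the head -/
def hd (l : List ℕ+) : ℕ := (List.map PNat.val l).getD 0 0

theorem incHead_inj : Function.Injective incHead := by
  intro a b h
  cases a <;> cases b <;> simp_all [incHead]

theorem comps_disj (n : ℕ) :
    Disjoint ((comps n).image (fun l => 1 :: l)) ((comps n).image incHead) := by
  rw [Finset.disjoint_left]
  intro l h1 h2
  simp only [Finset.mem_image] at h1 h2
  obtain ⟨a, -, rfl⟩ := h1
  obtain ⟨b, -, hb⟩ := h2
  cases b with
  | nil => simp [incHead] at hb
  | cons b t =>
    simp only [incHead, List.cons.injEq] at hb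
    have := congrArg PNat.val hb.1
    have hb0 := b.pos
    rw [PNat.add_coe] at this
    simp at this

theorem sum_comps_succ (n : ℕ) (f : List ℕ+ → ℕ) : ∑ l ∈ comps (n + 1), f l =
    ∑ l ∈ comps n, f (1 :: l) + ∑ l ∈ comps n, f (incHead l) := by
  rw [comps, Finset.sum_union (comps_disj n), Finset.sum_image, Finset.sum_image]
  · exact incHead_inj.injOn
  · intro a _ b _ h; simpa using h

theorem card_comps (n : ℕ) : ∑ l ∈ comps n, 1 = 2 ^ n := by
  induction n with
  | zero => simp [comps]
  | succ n ih => rw [sum_comps_succ, ih]; ring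

theorem hd_comps (n : ℕ) : ∑ l ∈ comps n, hd l + 1 = 2 ^ (n + 1) := by
  induction n with
  | zero => simp [comps, hd]
  | succ n ih =>
    rw [sum_comps_succ]
    have h1 : ∑ l ∈ comps n, hd (1 :: l) = ∑ l ∈ comps n, 1 :=
      Finset.sum_congr rfl fun l _ => by simp [hd]
    have h2 : ∑ l ∈ comps n, hd (incHead l) = ∑ l ∈ comps n, (hd l + 1) := by
      refine Finset.sum_congr rfl fun l hl => ?_
      cases l with
      | nil => rw [mem_comps] at hl; simp [csum_nil] at hl
      | cons a t => simp [hd, incHead]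
    rw [h1, h2, Finset.sum_add_distrib, card_comps, pow_succ 2 (n + 1), ← ih,
      add_assoc, add_assoc]
    have := ih
    rw [pow_succ] at this
    omega

theorem sum_hd_rotate (w : List ℕ+) : ∑ i ∈ Finset.range w.length, hd (w.rotate i) = csum w := by
  have h1 : ∀ l : List ℕ, ∑ i ∈ Finset.range l.length, l.getD i 0 = l.sum := by
    intro l
    induction l with
    | nil => simp
    | cons a t ih =>
      rw [List.length_cons, Finset.sum_range_succ', List.sum_cons, ← ih]
      simp [add_comm]
  rw [csum, ← h1, List.length_map]
  refine Finset.sum_congr rfl fun i hi => ?_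
  have hi' : i < w.length := by simpa using hi
  rw [hd, List.map_rotate, List.getD_eq_getElem _ _ (by simp; omega),
    List.getD_eq_getElem _ _ (by simp; omega), List.getElem_rotate]
  simp [Nat.mod_eq_of_lt hi']

theorem hd_lpow (w : List ℕ+) {k : ℕ} (hk : 0 < k) (hw : w ≠ []) : hd (lpow w k) = hd w := by
  obtain ⟨k, rfl⟩ := Nat.exists_eq_succ_of_ne_zero hk.ne'
  cases w with
  | nil => exact absurd rfl hw
  | cons a t => simp [lpow, hd]

theorem csum_rotate (w : List ℕ+) (i : ℕ) : csum (w.rotate i) = csum w :=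
  ((List.rotate_perm w i).map _).sum_eq

open Classical in
/-- Lyndon compositions of `n` -/
noncomputable def lyns (n : ℕ) : Finset (List ℕ+) :=
  (comps (n - 1)).filter (fun l : List ℕ+ => csum l = n ∧ IsLyndonComp l)

theorem mem_lyns (n : ℕ) (l : List ℕ+) : l ∈ lyns n ↔ csum l = n ∧ IsLyndonComp l := by
  classical
  rw [lyns, Finset.mem_filter, mem_comps]
  refine ⟨fun h => h.2, fun h => ⟨?_, h⟩⟩
  have : csum l ≠ 0 := fun h0 => h.2.1 (csum_eq_zero h0)
  omega

theorem sum_lyns (n : ℕ) (hn : 0 < n) :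
    ∑ d ∈ n.divisors, d * (lyns d).card + 1 = 2 ^ n := by
  obtain ⟨m, rfl⟩ := Nat.exists_eq_succ_of_ne_zero hn.ne'
  rw [Nat.succ_eq_add_one, ← hd_comps m]
  congr 1
  have h1 : ∀ d ∈ (m + 1).divisors, d * (lyns d).card =
      ∑ w ∈ lyns d, ∑ i ∈ Finset.range w.length, hd (w.rotate i) := by
    intro d _
    rw [mul_comm, ← smul_eq_mul, ← Finset.sum_const]
    refine Finset.sum_congr rfl fun w hw => ?_
    rw [sum_hd_rotate, ((mem_lyns _ _).1 hw).1]
  rw [Finset.sum_congr rfl h1, Finset.sum_sigma', Finset.sum_sigma']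
  have hkey : ∀ d, d ∣ m + 1 → 0 < (m + 1) / d := fun d hd =>
    Nat.div_pos (Nat.le_of_dvd (by omega) hd) (Nat.pos_of_dvd_of_pos hd (by omega))
  refine Finset.sum_nbij (fun x => (lpow x.1.2 ((m + 1) / x.1.1)).rotate x.2) ?_ ?_ ?_ ?_
  · rintro ⟨⟨d, w⟩, i⟩ h
    simp only [Finset.mem_sigma, Nat.mem_divisors, mem_lyns, Finset.mem_range] at h
    obtain ⟨⟨⟨hd, -⟩, hw, -⟩, -⟩ := h
    rw [mem_comps, csum_rotate, lpow_csum, hw]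
    exact Nat.div_mul_cancel hd
  · rintro ⟨⟨d, w⟩, i⟩ h ⟨⟨d', w'⟩, i'⟩ h' e
    simp only [Finset.mem_coe, Finset.mem_sigma, Nat.mem_divisors, mem_lyns,
      Finset.mem_range] at h h'
    obtain ⟨⟨⟨hd, -⟩, hw, hl⟩, hi⟩ := h
    obtain ⟨⟨⟨hd', -⟩, hw', hl'⟩, hi'⟩ := h'
    obtain ⟨rfl, rfl⟩ := lyn_unique hl hl' (hkey d hd) (hkey d' hd') hi hi' e
    have : d = d' := by rw [← hw, ← hw']
    subst this
    rfl
  · intro c hc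
    rw [Finset.mem_coe, mem_comps] at hc
    obtain ⟨w, k, i, hw, hk, hi, rfl⟩ := exists_lyn c (by rintro rfl; simp [csum_nil] at hc)
    rw [csum_rotate, lpow_csum] at hc
    have hpos : 0 < csum w := Nat.pos_of_ne_zero fun h0 => hw.1 (csum_eq_zero h0)
    refine ⟨⟨⟨csum w, w⟩, i⟩, ?_, ?_⟩
    · simp only [Finset.mem_coe, Finset.mem_sigma, Nat.mem_divisors, mem_lyns, Finset.mem_range]
      exact ⟨⟨⟨⟨k, by rw [← hc, mul_comm]⟩, by omega⟩, by simp, hw⟩, hi⟩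
    · simp only
      rw [← hc, Nat.mul_div_cancel _ hpos]
  · rintro ⟨⟨d, w⟩, i⟩ h
    simp only [Finset.mem_sigma, Nat.mem_divisors, mem_lyns, Finset.mem_range] at h
    obtain ⟨⟨⟨hd, -⟩, hw, hl⟩, hi⟩ := h
    simp only
    rw [lpow_rotate, hd_lpow _ (hkey d hd)]
    simpa using hl.1

/-- The number of Lyndon compositions of `n` is `(1/n) Σ_{d ∣ n} μ(d) (2^{n/d} − 1)`. -/
theorem card_lyndon_compositions (n : ℕ) (hn : 1 ≤ n) :
    (Set.ncard {I : List ℕ+ | (I.map fun x => (x : ℕ)).sum = n ∧ IsLyndonComp I} : ℚ) =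
      (1 / (n : ℚ)) *
        ∑ d ∈ n.divisors, (ArithmeticFunction.moebius d : ℚ) * (2 ^ (n / d) - 1) := by
  have hset : {I : List ℕ+ | (I.map fun x => (x : ℕ)).sum = n ∧ IsLyndonComp I} =
      (lyns n : Set (List ℕ+)) := by
    ext l
    rw [Finset.mem_coe, mem_lyns, csum]
    simp [← List.map_eq_flatMap]
    exact fun _ => Iff.rfl
  rw [hset, Set.ncard_coe_finset]
  have key := (ArithmeticFunction.sum_eq_iff_sum_mul_moebius_eq
    (f := fun d => (d : ℚ) * ((lyns d).card : ℚ)) (g := fun n => (2 : ℚ) ^ n - 1)).1 (by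
      intro n hn
      rw [eq_sub_iff_add_eq]
      exact_mod_cast sum_lyns n hn) n hn
  have h2 := Nat.sum_divisorsAntidiagonal
    (fun a b => (ArithmeticFunction.moebius a : ℚ) * ((2 : ℚ) ^ b - 1)) (n := n)
  rw [← h2, key]
  have : (n : ℚ) ≠ 0 := by positivity
  field_simp
end
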